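/- Let C be an [n,k,d] code with ((d−1)/n)^4 ≥ 7/8. Then the Tanner pair (G^n_{4,2}, C²) is 2^{-32}-robust, where G^n_{4,2} = G^n_4 © G^n_3 is the composition of the 4-Product-Tester graph (tests are 3-dimensional slices, compared against C³) with the 3-Product-Tester graph (tests are 2-dimensional slices, compared against C²). In particular C⁴ = TPC(G^n_{4,2}, C²), and global distance from C⁴ translates to expected distance of random 2-dimensional axis-parallel slices from C² up to factor 2^{-32}. -/

import Mathlib

/-- Relative Hamming distance between two words indexed by a finite type. -/
noncomputable def relHammingDist {ι F : Type} [Fintype ι] [DecidableEq F] (x y : ι → F) : ℝ :=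
  (hammingDist x y : ℝ) / (Fintype.card ι)

/-- Relative Hamming distance from a word to (the nearest codeword of) a code. -/
noncomputable def distToCode {ι F : Type} [Fintype ι] [DecidableEq F] (C : Set (ι → F)) (r : ι → F) : ℝ :=
  sInf (relHammingDist r '' C)

/-- Minimum Hamming distance of a code. -/
noncomputable def minDist {ι F : Type} [Fintype ι] [DecidableEq F] (C : Set (ι → F)) : ℕ :=
  sInf {e | ∃ x ∈ C, ∃ y ∈ C, x ≠ y ∧ hammingDist x y = e}

/-- The `m`-fold tensor power `C^m` of a code `C ⊆ F^n`. -/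
def tensorPow {F : Type} {n : ℕ} (C : Set (Fin n → F)) (m : ℕ) :
    Set ((Fin m → Fin n) → F) :=
  {r | ∀ (b : Fin m) (x : Fin m → Fin n), (fun i => r (Function.update x b i)) ∈ C}

/-- The slice `r_{b,i}`: fix the `b`-th coordinate of the array to `i`. -/
def sliceAt {F : Type} {n m : ℕ} (r : (Fin (m + 1) → Fin n) → F) (b : Fin (m + 1)) (i : Fin n) :
    (Fin m → Fin n) → F :=
  fun x => r (b.insertNth i x)

/-!
Replace `r`, in each of three directions `a`, `b`, `c`, by an array whose slices are codewords
nearest to the slices of `r`. Two of these arrays `g_a`, `g_c` are codewords along every line except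
in the directions `a` and `c`, so one disagreement between them forces `d ^ (m - 2)` in the same
codimension-two slice; hence on few hyperplanes `x a = i` do at least `d / 2` of the slices in
direction `c` contain a disagreement. Off these bad hyperplanes `g_a = g_b`: on a line in direction
`c` each differs from `g_c` in fewer than `d / 2` places. Treating the bad hyperplanes of `g_b` as
erasures, a projection onto the code along direction `b` turns `g_b` into a codeword of the tensor
power that equals `g_a` off the bad hyperplanes of `g_a`. This gives the robustness of one product
tester, and robustness is multiplicative under composition.
-/

open Finset

section Tanner

variable {ι κ μ F : Type} {T U : Type*}

/-- The Tanner product code `TPC(G, D)` of an ordered bipartite graph `G` with left vertices `ι`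
and right vertices `T`. The ordered neighbourhood of `t : T` is encoded as the map
`G t : κ → ι`, so that `r ∘ G t` is the view of `r` at `t`. -/
def tannerCode (G : T → κ → ι) (D : Set (κ → F)) : Set (ι → F) :=
  {r | ∀ t, r ∘ G t ∈ D}

/-- The Tanner composition `G © H`. -/
def tannerComp (G : T → κ → ι) (H : U → μ → κ) : T × U → μ → ι :=
  fun p => G p.1 ∘ H p.2

/-- `α`-robustness of the pair `(G, D)`: the expected distance from `D` of a uniformly random view
is at least `α` times the distance from `TPC(G, D)`. -/
def IsRobust [Fintype ι] [Fintype κ] [Fintype T] [DecidableEq F] (G : T → κ → ι)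
    (D : Set (κ → F)) (α : ℝ) : Prop :=
  ∀ r : ι → F,
    α * distToCode (tannerCode G D) r ≤ (∑ t, distToCode D (r ∘ G t)) / Fintype.card T

theorem tannerCode_tannerComp (G : T → κ → ι) (H : U → μ → κ) (D : Set (μ → F)) :
    tannerCode (tannerComp G H) D = tannerCode G (tannerCode H D) := by
  ext r
  exact Prod.forall

variable [Fintype ι] [Fintype κ] [Fintype μ] [Fintype T] [Fintype U] [DecidableEq F]

theorem relHammingDist_nonneg (x y : ι → F) : 0 ≤ relHammingDist x y := by
  unfold relHammingDist
  positivity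

theorem distToCode_nonneg (C : Set (ι → F)) (r : ι → F) : 0 ≤ distToCode C r := by
  refine Real.sInf_nonneg ?_
  rintro _ ⟨c, _, rfl⟩
  exact relHammingDist_nonneg r c

theorem distToCode_le {C : Set (ι → F)} {c : ι → F} (hc : c ∈ C) (r : ι → F) :
    distToCode C r ≤ relHammingDist r c := by
  refine csInf_le ⟨0, ?_⟩ ⟨c, hc, rfl⟩
  rintro _ ⟨y, _, rfl⟩
  exact relHammingDist_nonneg r y

theorem exists_relHammingDist_eq_distToCode {C : Set (ι → F)} (hC : C.Nonempty) (r : ι → F) :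
    ∃ c ∈ C, relHammingDist r c = distToCode C r := by
  have hfin : (relHammingDist r '' C).Finite := by
    refine ((Set.finite_Iic (Fintype.card ι)).image
      fun e : ℕ => (e : ℝ) / Fintype.card ι).subset ?_
    rintro _ ⟨c, _, rfl⟩
    exact ⟨hammingDist r c, hammingDist_le_card_fintype, rfl⟩
  exact (hC.image _).csInf_mem hfin

theorem IsRobust.comp {G : T → κ → ι} {H : U → μ → κ} {D : Set (μ → F)} {α β : ℝ}
    (hG : IsRobust G (tannerCode H D) α) (hH : IsRobust H D β) (hβ : 0 ≤ β) :
    IsRobust (tannerComp G H) D (α * β) := by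
  intro r
  rw [tannerCode_tannerComp]
  calc α * β * distToCode (tannerCode G (tannerCode H D)) r
      = β * (α * distToCode (tannerCode G (tannerCode H D)) r) := by ring
    _ ≤ β * ((∑ t, distToCode (tannerCode H D) (r ∘ G t)) / Fintype.card T) :=
        mul_le_mul_of_nonneg_left (hG r) hβ
    _ = (∑ t, β * distToCode (tannerCode H D) (r ∘ G t)) / Fintype.card T := by
        rw [mul_div_assoc', mul_sum]
    _ ≤ (∑ t, (∑ u, distToCode D ((r ∘ G t) ∘ H u)) / Fintype.card U) / Fintype.card T := by
        gcongr with t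
        exact hH (r ∘ G t)
    _ = (∑ p, distToCode D (r ∘ tannerComp G H p)) / Fintype.card (T × U) := by
        rw [← sum_div, div_div, Fintype.sum_prod_type, Fintype.card_prod, Nat.cast_mul,
          mul_comm (Fintype.card U : ℝ)]
        rfl

end Tanner

section Lines

variable {ι κ F : Type*} [DecidableEq ι]

/-- The arrays all of whose lines in direction `t` belong to `C`; intersecting over `t` gives the
tensor power of `C`. -/
def lineCode (C : Set (κ → F)) (t : ι) : Set ((ι → κ) → F) :=
  {r | ∀ x, (fun j => r (Function.update x t j)) ∈ C}

theorem sub_mem_lineCode [Ring F] {C : Submodule F (κ → F)} {t : ι} {g g' : (ι → κ) → F}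
    (hg : g ∈ lineCode (C : Set (κ → F)) t) (hg' : g' ∈ lineCode (C : Set (κ → F)) t) :
    g - g' ∈ lineCode (C : Set (κ → F)) t :=
  fun x => C.sub_mem (hg x) (hg' x)

variable [CommSemiring F]

/-- The array obtained by applying `P` to every line in direction `b`. -/
def applyAlong (b : ι) (P : (κ → F) →ₗ[F] (κ → F)) (g : (ι → κ) → F) : (ι → κ) → F :=
  fun x => P (fun j => g (Function.update x b j)) (x b)

theorem applyAlong_mem_lineCode_self {C : Set (κ → F)} {b : ι} {P : (κ → F) →ₗ[F] (κ → F)}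
    (hP : ∀ v, P v ∈ C) (g : (ι → κ) → F) : applyAlong b P g ∈ lineCode C b := by
  intro x
  simpa [applyAlong] using hP fun j => g (Function.update x b j)

theorem applyAlong_mem_lineCode_of_ne [Finite κ] {C : Submodule F (κ → F)} {b t : ι}
    (htb : t ≠ b) (P : (κ → F) →ₗ[F] (κ → F)) {g : (ι → κ) → F}
    (hg : g ∈ lineCode (C : Set (κ → F)) t) :
    applyAlong b P g ∈ lineCode (C : Set (κ → F)) t := by
  classical
  have := Fintype.ofFinite κ
  intro x
  -- A line of the image is a fixed linear combination of lines of `g`.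
  have hcomb : (fun i => applyAlong b P g (Function.update x t i)) =
      ∑ j, P (fun k => if j = k then 1 else 0) (x b) •
        fun i => g (Function.update (Function.update x b j) t i) := by
    funext i
    simp only [applyAlong, Function.update_of_ne htb.symm, Function.update_comm htb]
    rw [LinearMap.pi_apply_eq_sum_univ]
    simp [mul_comm]
  rw [hcomb]
  exact C.sum_mem fun j _ => C.smul_mem _ (hg _)

end Lines

section Counting

variable {ι κ F : Type*} [Fintype ι] [DecidableEq ι] [Fintype κ] [DecidableEq κ]

theorem card_mul_le_card_of_le_card_fiber {α β : Type*} [DecidableEq β] {s : Finset α}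
    {f : α → β} {t : Finset β} {k : ℕ} (h : ∀ b ∈ t, k ≤ #{a ∈ s | f a = b}) :
    #t * k ≤ #s :=
  calc #t * k ≤ ∑ b ∈ t, #{a ∈ s | f a = b} := by
        simpa using card_nsmul_le_sum t _ k h
    _ = #{a ∈ s | f a ∈ t} := sum_card_fiberwise_eq_card_filter s t f
    _ ≤ #s := card_filter_le _ _

theorem card_filter_apply_mem (a : ι) (B : Finset κ) :
    #{x : ι → κ | x a ∈ B} = #B * Fintype.card κ ^ (Fintype.card ι - 1) := by
  rw [← sum_card_fiberwise_eq_card_filter univ B fun x : ι → κ => x a]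
  refine sum_const_nat fun i _ => ?_
  simpa using Fintype.card_filter_piFinset_const (univ : Finset κ) a i

variable [DecidableEq F]

/-- The positions `k` in direction `c` for which `g` and `g'` differ somewhere on the
codimension-two slice `x a = i`, `x c = k`. -/
def conflictSet (a c : ι) (g g' : (ι → κ) → F) (i : κ) : Finset κ :=
  image (fun x => x c) {x | x a = i ∧ g x ≠ g' x}

/-- The hyperplanes `x a = i` on which at least `d / 2` codimension-two slices in direction `c`
witness a disagreement between `g` and `g'`. -/
def badSlices (d : ℕ) (a c : ι) (g g' : (ι → κ) → F) : Finset κ :=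
  {i | d ≤ 2 * #(conflictSet a c g g' i)}

variable [Ring F] {C : Submodule F (κ → F)} {d : ℕ}

theorem pow_card_le_card_support_inter_subcube (hC : ∀ w ∈ C, w ≠ 0 → d ≤ hammingNorm w)
    {h : (ι → κ) → F} {T : Finset ι} (hT : ∀ t ∈ T, h ∈ lineCode (C : Set (κ → F)) t)
    {x₀ : ι → κ} (hx₀ : h x₀ ≠ 0) :
    d ^ #T ≤ #{x | (∀ s ∉ T, x s = x₀ s) ∧ h x ≠ 0} := by
  induction T using Finset.induction_on generalizing x₀ with
  | empty => exact card_pos.2 ⟨x₀, by simp [hx₀]⟩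
  | insert t T htT ih =>
    have hline : d ≤ #{j | h (Function.update x₀ t j) ≠ 0} :=
      hC _ (hT t (mem_insert_self t T) x₀) fun h0 => hx₀ (by simpa using congrFun h0 (x₀ t))
    rw [card_insert_of_notMem htT, pow_succ']
    refine (Nat.mul_le_mul_right _ hline).trans
      (card_mul_le_card_of_le_card_fiber (f := fun x => x t) fun j hj => ?_)
    refine (ih (fun s hs => hT s (mem_insert_of_mem hs)) (mem_filter.1 hj).2).trans
      (card_le_card fun x hx => ?_)
    simp only [mem_filter, mem_univ, true_and, mem_insert, not_or] at hx ⊢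
    refine ⟨⟨fun s hs => ?_, hx.2⟩, by simpa using hx.1 t htT⟩
    rw [hx.1 s hs.2, Function.update_of_ne hs.1]

theorem card_conflictSet_mul_pow_le (hC : ∀ w ∈ C, w ≠ 0 → d ≤ hammingNorm w) {a c : ι}
    (hac : a ≠ c) {g g' : (ι → κ) → F} (hg : ∀ t ≠ a, g ∈ lineCode (C : Set (κ → F)) t)
    (hg' : ∀ t ≠ c, g' ∈ lineCode (C : Set (κ → F)) t) (i : κ) :
    #(conflictSet a c g g' i) * d ^ (Fintype.card ι - 2) ≤ #{x | x a = i ∧ g x ≠ g' x} := by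
  refine card_mul_le_card_of_le_card_fiber (f := fun x => x c) fun k hk => ?_
  obtain ⟨x₀, hx₀, rfl⟩ := mem_image.1 hk
  obtain ⟨rfl, hne⟩ := (mem_filter.1 hx₀).2
  have hT : ∀ t ∈ ({a, c} : Finset ι)ᶜ, g - g' ∈ lineCode (C : Set (κ → F)) t := by
    intro t ht
    obtain ⟨hta, htc⟩ : t ≠ a ∧ t ≠ c := by simpa using ht
    exact sub_mem_lineCode (hg t hta) (hg' t htc)
  have hsupp := pow_card_le_card_support_inter_subcube hC hT (x₀ := x₀) (sub_ne_zero.2 hne)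
  rw [card_compl, card_pair hac] at hsupp
  refine hsupp.trans (card_le_card fun x hx => ?_)
  simp only [mem_filter, mem_univ, true_and, Pi.sub_apply, sub_ne_zero] at hx ⊢
  exact ⟨⟨hx.1 a (by simp), hx.2⟩, hx.1 c (by simp)⟩

theorem card_badSlices_mul_pow_le (hC : ∀ w ∈ C, w ≠ 0 → d ≤ hammingNorm w) {a c : ι}
    (hac : a ≠ c) {g g' : (ι → κ) → F} (hg : ∀ t ≠ a, g ∈ lineCode (C : Set (κ → F)) t)
    (hg' : ∀ t ≠ c, g' ∈ lineCode (C : Set (κ → F)) t) :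
    #(badSlices d a c g g') * d ^ (Fintype.card ι - 1) ≤ 2 * hammingDist g g' := by
  have hι : 1 < Fintype.card ι := Fintype.one_lt_card_iff.2 ⟨a, c, hac⟩
  have hslice : ∀ i ∈ badSlices d a c g g',
      d ^ (Fintype.card ι - 1) ≤ 2 * #{x ∈ {x | g x ≠ g' x} | x a = i} := fun i hi =>
    calc d ^ (Fintype.card ι - 1) = d * d ^ (Fintype.card ι - 2) := by
          rw [← pow_succ']
          congr 1
          omega
      _ ≤ 2 * #(conflictSet a c g g' i) * d ^ (Fintype.card ι - 2) :=
          Nat.mul_le_mul_right _ (mem_filter.1 hi).2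
      _ ≤ 2 * #{x | x a = i ∧ g x ≠ g' x} := by
          rw [mul_assoc]
          exact Nat.mul_le_mul_left 2 (card_conflictSet_mul_pow_le hC hac hg hg' i)
      _ = 2 * #{x ∈ {x | g x ≠ g' x} | x a = i} := by
          simp only [filter_filter, and_comm]
  calc #(badSlices d a c g g') * d ^ (Fintype.card ι - 1)
      ≤ ∑ i ∈ badSlices d a c g g', 2 * #{x ∈ {x | g x ≠ g' x} | x a = i} := by
        simpa using card_nsmul_le_sum _ _ _ hslice
    _ = 2 * #{x ∈ {x | g x ≠ g' x} | x a ∈ badSlices d a c g g'} := by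
        rw [← mul_sum, sum_card_fiberwise_eq_card_filter]
    _ ≤ 2 * hammingDist g g' := Nat.mul_le_mul_left 2 (card_filter_le _ _)

theorem pow_mul_card_badSlices_mul_pow_le (hC : ∀ w ∈ C, w ≠ 0 → d ≤ hammingNorm w)
    (hd : d ≤ Fintype.card κ) {a c : ι} (hac : a ≠ c) {g g' : (ι → κ) → F}
    (hg : ∀ t ≠ a, g ∈ lineCode (C : Set (κ → F)) t)
    (hg' : ∀ t ≠ c, g' ∈ lineCode (C : Set (κ → F)) t) :
    d ^ Fintype.card ι * (#(badSlices d a c g g') * Fintype.card κ ^ (Fintype.card ι - 1)) ≤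
      2 * Fintype.card κ ^ Fintype.card ι * hammingDist g g' := by
  have hι : Fintype.card ι ≠ 0 := (Fintype.card_pos_iff.2 ⟨a⟩).ne'
  rw [← mul_pow_sub_one hι, ← mul_pow_sub_one hι]
  calc d * d ^ (Fintype.card ι - 1) *
        (#(badSlices d a c g g') * Fintype.card κ ^ (Fintype.card ι - 1))
      = #(badSlices d a c g g') * d ^ (Fintype.card ι - 1) *
          (d * Fintype.card κ ^ (Fintype.card ι - 1)) := by ring
    _ ≤ 2 * hammingDist g g' * (Fintype.card κ * Fintype.card κ ^ (Fintype.card ι - 1)) :=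
        Nat.mul_le_mul (card_badSlices_mul_pow_le hC hac hg hg') (Nat.mul_le_mul_right _ hd)
    _ = _ := by ring

theorem eq_of_notMem_badSlices (hC : ∀ w ∈ C, w ≠ 0 → d ≤ hammingNorm w) {a b c : ι}
    (hac : a ≠ c) (hbc : b ≠ c) {ga gb : (ι → κ) → F} (gc : (ι → κ) → F)
    (hga : ga ∈ lineCode (C : Set (κ → F)) c) (hgb : gb ∈ lineCode (C : Set (κ → F)) c)
    {x : ι → κ} (hxa : x a ∉ badSlices d a c ga gc) (hxb : x b ∉ badSlices d b c gb gc) :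
    ga x = gb x := by
  by_contra hne
  have hline : d ≤ #{k | (ga - gb) (Function.update x c k) ≠ 0} :=
    hC _ (sub_mem_lineCode hga hgb x) fun h0 =>
      hne (sub_eq_zero.1 (by simpa using congrFun h0 (x c)))
  have hconflict : ({k | (ga - gb) (Function.update x c k) ≠ 0} : Finset κ) ⊆
      conflictSet a c ga gc (x a) ∪ conflictSet b c gb gc (x b) := by
    intro k hk
    have hk : ga (Function.update x c k) ≠ gb (Function.update x c k) :=
      sub_ne_zero.1 (mem_filter.1 hk).2
    simp only [conflictSet, mem_union, mem_image, mem_filter, mem_univ, true_and]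
    by_cases h : ga (Function.update x c k) = gc (Function.update x c k)
    · exact .inr ⟨Function.update x c k, by simpa [hbc] using h ▸ hk.symm, by simp⟩
    · exact .inl ⟨Function.update x c k, by simpa [hac] using h, by simp⟩
  have hcard := (card_le_card hconflict).trans (card_union_le _ _)
  simp only [badSlices, mem_filter, mem_univ, true_and, not_le] at hxa hxb
  omega

end Counting

section Decoding

variable {ι κ F : Type*} [DecidableEq ι] [Fintype κ] [Field F] [DecidableEq F]
  {C : Submodule F (κ → F)} {d : ℕ}

theorem exists_projection_of_card_lt (hC : ∀ w ∈ C, w ≠ 0 → d ≤ hammingNorm w)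
    {S : Finset κ} (hS : Fintype.card κ < #S + d) :
    ∃ P : (κ → F) →ₗ[F] (κ → F), (∀ v, P v ∈ C) ∧ (∀ w ∈ C, P w = w) ∧
      ∀ v v', (∀ j ∈ S, v j = v' j) → P v = P v' := by
  classical
  let K : Submodule F (κ → F) := ⨅ j ∈ S, LinearMap.ker (LinearMap.proj j)
  have mem_K (v : κ → F) : v ∈ K ↔ ∀ j ∈ S, v j = 0 := by simp [K]
  have hdisj : Disjoint K C := by
    refine Submodule.disjoint_def.2 fun w hwK hwC => by_contra fun hw => ?_
    have hsupp : hammingNorm w ≤ #Sᶜ := card_le_card fun j hj => by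
      simpa using fun hjS => (mem_filter.1 hj).2 ((mem_K w).1 hwK j hjS)
    have := hC w hwC hw
    have := card_add_card_compl S
    omega
  obtain ⟨K', hKK', hcompl⟩ := hdisj.exists_isCompl
  refine ⟨C.projection K' hcompl.symm, Submodule.projection_apply_mem _,
    fun w hw => Submodule.projection_apply_of_mem_left _ hw, fun v v' hvv' => ?_⟩
  rw [← sub_eq_zero, ← map_sub, Submodule.projection_apply_eq_zero_iff]
  exact hKK' ((mem_K _).2 fun j hj => sub_eq_zero.2 (hvv' j hj))

theorem exists_erasure_correction (hC : ∀ w ∈ C, w ≠ 0 → d ≤ hammingNorm w)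
    {b : ι} {g : (ι → κ) → F} (hg : ∀ t ≠ b, g ∈ lineCode (C : Set (κ → F)) t)
    {S : Finset κ} (hS : Fintype.card κ < #S + d) :
    ∃ w : (ι → κ) → F, (∀ t, w ∈ lineCode (C : Set (κ → F)) t) ∧
      ∀ g' ∈ lineCode (C : Set (κ → F)) b, ∀ x,
        (∀ j ∈ S, g (Function.update x b j) = g' (Function.update x b j)) → w x = g' x := by
  obtain ⟨P, hPC, hPid, hPS⟩ := exists_projection_of_card_lt hC hS
  refine ⟨applyAlong b P g, fun t => ?_, fun g' hg' x hx => ?_⟩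
  · obtain rfl | htb := eq_or_ne t b
    · exact applyAlong_mem_lineCode_self hPC g
    · exact applyAlong_mem_lineCode_of_ne htb P (hg t htb)
  · simp only [applyAlong]
    rw [hPS _ _ hx, hPid _ (hg' x)]
    simp only [Function.update_eq_self]

variable [Fintype ι]

theorem exists_tensor_codeword_of_card_badSlices_lt [DecidableEq κ]
    (hC : ∀ w ∈ C, w ≠ 0 → d ≤ hammingNorm w) {a b c : ι} (hab : a ≠ b) (hac : a ≠ c)
    (hbc : b ≠ c) {ga gb gc : (ι → κ) → F}
    (hga : ∀ t ≠ a, ga ∈ lineCode (C : Set (κ → F)) t)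
    (hgb : ∀ t ≠ b, gb ∈ lineCode (C : Set (κ → F)) t) (hB : #(badSlices d b c gb gc) < d) :
    ∃ w : (ι → κ) → F, (∀ t, w ∈ lineCode (C : Set (κ → F)) t) ∧
      hammingDist ga w ≤
        #(badSlices d a c ga gc) * Fintype.card κ ^ (Fintype.card ι - 1) := by
  have hS : Fintype.card κ < #(badSlices d b c gb gc)ᶜ + d := by
    have := card_compl_add_card (badSlices d b c gb gc)
    omega
  obtain ⟨w, hwC, hw⟩ := exists_erasure_correction hC hgb hS
  refine ⟨w, hwC, ?_⟩
  rw [← card_filter_apply_mem a]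
  refine card_le_card fun x hx => ?_
  simp only [mem_filter, mem_univ, true_and] at hx ⊢
  by_contra hxa
  refine hx (hw ga (hga b hab.symm) x fun j hj => Eq.symm ?_).symm
  refine eq_of_notMem_badSlices hC hac hbc gc (hga c hac.symm) (hgb c hbc.symm) ?_ ?_
  · rwa [Function.update_of_ne hab]
  · simpa using hj

theorem exists_tensor_codeword_near (hC : ∀ w ∈ C, w ≠ 0 → d ≤ hammingNorm w)
    (hd : d ≤ Fintype.card κ) {a b c : ι} (hab : a ≠ b) (hac : a ≠ c) (hbc : b ≠ c)
    (r : (ι → κ) → F) {ga gb gc : (ι → κ) → F}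
    (hga : ∀ t ≠ a, ga ∈ lineCode (C : Set (κ → F)) t)
    (hgb : ∀ t ≠ b, gb ∈ lineCode (C : Set (κ → F)) t)
    (hgc : ∀ t ≠ c, gc ∈ lineCode (C : Set (κ → F)) t) :
    ∃ w : (ι → κ) → F, (∀ t, w ∈ lineCode (C : Set (κ → F)) t) ∧
      d ^ Fintype.card ι * hammingDist r w ≤
        (d ^ Fintype.card ι + 2 * Fintype.card κ ^ Fintype.card ι) *
          (hammingDist r ga + hammingDist r gb + hammingDist r gc) := by
  classical
  have hι : Fintype.card ι ≠ 0 := (Fintype.card_pos_iff.2 ⟨a⟩).ne'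
  have hgagc := hammingDist_triangle_left ga gc r
  have hgbgc := hammingDist_triangle_left gb gc r
  obtain hB | hB := le_or_gt d #(badSlices d b c gb gc)
  · -- The disagreements are so many that even the zero codeword is close enough.
    refine ⟨0, fun _ _ => C.zero_mem, ?_⟩
    have hpow : d ^ Fintype.card ι ≤ 2 * hammingDist gb gc := by
      rw [← mul_pow_sub_one hι]
      exact (Nat.mul_le_mul_right _ hB).trans (card_badSlices_mul_pow_le hC hbc hgb hgc)
    have hr : hammingDist r 0 ≤ Fintype.card κ ^ Fintype.card ι :=
      hammingDist_le_card_fintype.trans_eq Fintype.card_fun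
    calc d ^ Fintype.card ι * hammingDist r 0
        ≤ 2 * hammingDist gb gc * Fintype.card κ ^ Fintype.card ι := Nat.mul_le_mul hpow hr
      _ = 2 * Fintype.card κ ^ Fintype.card ι * hammingDist gb gc := by ring
      _ ≤ _ := Nat.mul_le_mul (Nat.le_add_left _ _) (by omega)
  · obtain ⟨w, hwC, hw⟩ :=
      exists_tensor_codeword_of_card_badSlices_lt hC hab hac hbc hga hgb hB
    refine ⟨w, hwC, ?_⟩
    calc d ^ Fintype.card ι * hammingDist r w
        ≤ d ^ Fintype.card ι * (hammingDist r ga +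
            #(badSlices d a c ga gc) * Fintype.card κ ^ (Fintype.card ι - 1)) :=
          Nat.mul_le_mul_left _
            ((hammingDist_triangle r ga w).trans (Nat.add_le_add_left hw _))
      _ ≤ d ^ Fintype.card ι * hammingDist r ga +
            2 * Fintype.card κ ^ Fintype.card ι * hammingDist ga gc := by
          rw [mul_add]
          exact Nat.add_le_add_left
            (pow_mul_card_badSlices_mul_pow_le hC hd hac hga hgc) _
      _ ≤ _ := by
          rw [add_mul]
          gcongr <;> omega

end Decoding

section ProductTester

variable {F : Type} {n m : ℕ}

/-- The graph `G^n_{m+1}` of the `(m + 1)`-Product-Tester: the neighbourhood of `(b, i)` is the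
slice `b ↦ i`, identified with `Fin m → Fin n` by deleting the coordinate `b`. -/
def productTester (n m : ℕ) : Fin (m + 1) × Fin n → (Fin m → Fin n) → Fin (m + 1) → Fin n :=
  fun p => p.1.insertNth (α := fun _ => Fin n) p.2

/-- The robustness obtained for the `m`-Product-Tester of a code of relative distance `δ`. -/
noncomputable def productTesterRobustness (δ : ℝ) (m : ℕ) : ℝ :=
  δ ^ m / (m * (δ ^ m + 2))

theorem forall_sliceAt_mem_tensorPow_iff {C : Set (Fin n → F)} {r : (Fin (m + 1) → Fin n) → F}
    {b : Fin (m + 1)} :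
    (∀ i, sliceAt r b i ∈ tensorPow C m) ↔ ∀ t ≠ b, r ∈ lineCode C t := by
  constructor
  · intro h t ht x
    obtain ⟨s, rfl⟩ := Fin.exists_succAbove_eq ht
    have := h (x b) s (b.removeNth x)
    simpa only [sliceAt, Fin.insertNth_update, Fin.insertNth_self_removeNth] using this
  · intro h i s x
    have := h (b.succAbove s) (Fin.succAbove_ne b s) (b.insertNth i x)
    simpa only [sliceAt, Fin.insertNth_update] using this

theorem tannerCode_productTester (C : Set (Fin n → F)) (hm : 1 ≤ m) :
    tannerCode (productTester n m) (tensorPow C m) = tensorPow C (m + 1) := by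
  have : Nontrivial (Fin (m + 1)) := Fin.nontrivial_iff_two_le.2 (by omega)
  ext r
  calc r ∈ tannerCode (productTester n m) (tensorPow C m)
      ↔ ∀ b i, sliceAt r b i ∈ tensorPow C m := Prod.forall
    _ ↔ ∀ b, ∀ t ≠ b, r ∈ lineCode C t := forall_congr' fun _ => forall_sliceAt_mem_tensorPow_iff
    _ ↔ r ∈ tensorPow C (m + 1) :=
      ⟨fun h t => let ⟨b, hb⟩ := exists_ne t; h b t hb.symm, fun h _ t _ => h t⟩

variable [DecidableEq F]

theorem hammingDist_eq_sum_sliceAt (r g : (Fin (m + 1) → Fin n) → F) (b : Fin (m + 1)) :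
    hammingDist r g = ∑ i, hammingDist (sliceAt r b i) (sliceAt g b i) := by
  simp only [hammingDist, card_filter]
  rw [← (Fin.insertNthEquiv (fun _ => Fin n) b).sum_comp, Fintype.sum_prod_type]
  rfl

theorem relHammingDist_eq_sum_sliceAt (r g : (Fin (m + 1) → Fin n) → F) (b : Fin (m + 1)) :
    relHammingDist r g = (∑ i, relHammingDist (sliceAt r b i) (sliceAt g b i)) / n := by
  simp only [relHammingDist, hammingDist_eq_sum_sliceAt r g b, Fintype.card_pi_const,
    Fintype.card_fin, ← sum_div, div_div]
  push_cast
  rw [pow_succ]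

theorem exists_slicewise_nearest {C : Set (Fin n → F)} (hC : (tensorPow C m).Nonempty)
    (r : (Fin (m + 1) → Fin n) → F) (b : Fin (m + 1)) :
    ∃ g : (Fin (m + 1) → Fin n) → F, (∀ t ≠ b, g ∈ lineCode C t) ∧
      relHammingDist r g = (∑ i, distToCode (tensorPow C m) (sliceAt r b i)) / n := by
  choose c hcC hc using fun i => exists_relHammingDist_eq_distToCode hC (sliceAt r b i)
  let g : (Fin (m + 1) → Fin n) → F := fun x => c (x b) (b.removeNth x)
  have hslice : ∀ i, sliceAt g b i = c i := fun i => by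
    funext x
    simp [g, sliceAt]
  refine ⟨g, forall_sliceAt_mem_tensorPow_iff.1 fun i => (hslice i).symm ▸ hcC i, ?_⟩
  simp only [relHammingDist_eq_sum_sliceAt r g b, hslice, hc]

variable [Field F] {C : Submodule F (Fin n → F)} {d : ℕ}

theorem exists_tensorPow_relHammingDist_le (hC : ∀ w ∈ C, w ≠ 0 → d ≤ hammingNorm w)
    (hd0 : 0 < d) (hdn : d ≤ n) {a b c : Fin m} (hab : a ≠ b) (hac : a ≠ c) (hbc : b ≠ c)
    (r : (Fin m → Fin n) → F) {g : Fin m → (Fin m → Fin n) → F}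
    (hg : ∀ s, ∀ t ≠ s, g s ∈ lineCode (C : Set (Fin n → F)) t) :
    ∃ w ∈ tensorPow (C : Set (Fin n → F)) m,
      ((d : ℝ) / n) ^ m * relHammingDist r w ≤
        (((d : ℝ) / n) ^ m + 2) * ∑ s, relHammingDist r (g s) := by
  obtain ⟨w, hw, hle⟩ := exists_tensor_codeword_near hC (by simpa using hdn) hab hac hbc r
    (hg a) (hg b) (hg c)
  refine ⟨w, hw, ?_⟩
  have hsum : hammingDist r (g a) + hammingDist r (g b) + hammingDist r (g c) ≤
      ∑ s, hammingDist r (g s) := by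
    rw [add_assoc, ← sum_pair (f := fun s => hammingDist r (g s)) hbc,
      ← sum_insert (f := fun s => hammingDist r (g s)) (by simp [hab, hac])]
    exact sum_le_univ_sum_of_nonneg fun _ => Nat.zero_le _
  replace hle := hle.trans (Nat.mul_le_mul_left _ hsum)
  simp only [Fintype.card_fin] at hle
  have hleR : (d : ℝ) ^ m * hammingDist r w ≤
      ((d : ℝ) ^ m + 2 * (n : ℝ) ^ m) * ∑ s, (hammingDist r (g s) : ℝ) := mod_cast hle
  have hn : (0 : ℝ) < n := mod_cast hd0.trans_le hdn
  simp only [relHammingDist, Fintype.card_pi_const, Fintype.card_fin, ← sum_div, Nat.cast_pow]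
  rw [div_pow, ← mul_le_mul_iff_right₀ (pow_pos (pow_pos hn m) 2)]
  field_simp
  linarith

theorem isRobust_productTester (hC : ∀ w ∈ C, w ≠ 0 → d ≤ hammingNorm w) (hd0 : 0 < d)
    (hdn : d ≤ n) (hm : 2 ≤ m) :
    IsRobust (productTester n m) (tensorPow (C : Set (Fin n → F)) m)
      (productTesterRobustness ((d : ℝ) / n) (m + 1)) := by
  intro r
  have hne : (tensorPow (C : Set (Fin n → F)) m).Nonempty := ⟨0, fun _ _ => C.zero_mem⟩
  choose g hgC hg using exists_slicewise_nearest hne r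
  obtain ⟨a, b, c, hab, hac, hbc⟩ : ∃ a b c : Fin (m + 1), a ≠ b ∧ a ≠ c ∧ b ≠ c :=
    Fintype.two_lt_card_iff.1 (by simpa using hm)
  obtain ⟨w, hwC, hw⟩ := exists_tensorPow_relHammingDist_le hC hd0 hdn hab hac hbc r hgC
  have hn : (0 : ℝ) < n := mod_cast hd0.trans_le hdn
  have hviews : ∑ s, relHammingDist r (g s) =
      (∑ p, distToCode (tensorPow (C : Set (Fin n → F)) m) (r ∘ productTester n m p)) / n := by
    simp only [hg, ← sum_div, Fintype.sum_prod_type]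
    rfl
  rw [tannerCode_productTester _ (by omega), productTesterRobustness]
  set δ : ℝ := d / n
  have hδ : 0 < δ := div_pos (mod_cast hd0) hn
  rw [hviews] at hw
  simp only [Fintype.card_prod, Fintype.card_fin, Nat.cast_mul]
  rw [div_mul_eq_mul_div, div_le_iff₀ (by positivity)]
  refine ((mul_le_mul_of_nonneg_left (distToCode_le hwC r) (by positivity)).trans hw).trans_eq ?_
  field_simp

end ProductTester

section Parameters

theorem minDist_le_hammingNorm {ι F : Type} [Fintype ι] [Ring F] [DecidableEq F]
    {C : Submodule F (ι → F)} {w : ι → F} (hw : w ∈ C) (hw0 : w ≠ 0) :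
    minDist (C : Set (ι → F)) ≤ hammingNorm w :=
  Nat.sInf_le ⟨w, hw, 0, C.zero_mem, hw0, hammingDist_zero_right w⟩

theorem minDist_pos {ι F : Type} [Fintype ι] [Ring F] [DecidableEq F]
    {C : Submodule F (ι → F)} (hC : C ≠ ⊥) : 0 < minDist (C : Set (ι → F)) := by
  obtain ⟨w, hw, hw0⟩ := C.exists_mem_ne_zero_of_ne_bot hC
  obtain ⟨x, -, y, -, hxy, hdist⟩ := Nat.sInf_mem
    (s := {e | ∃ x ∈ (C : Set (ι → F)), ∃ y ∈ (C : Set (ι → F)), x ≠ y ∧ hammingDist x y = e})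
    ⟨_, w, hw, 0, C.zero_mem, hw0, rfl⟩
  exact (hammingDist_pos.2 hxy).trans_eq hdist

theorem exists_le_hammingNorm_and_abs_minDist_sub_one_le {ι F : Type} [Fintype ι] [Nonempty ι]
    [Ring F] [DecidableEq F] (C : Submodule F (ι → F)) :
    ∃ d : ℕ, (∀ w ∈ C, w ≠ 0 → d ≤ hammingNorm w) ∧ 0 < d ∧ d ≤ Fintype.card ι ∧
      |(minDist (C : Set (ι → F)) : ℝ) - 1| ≤ d := by
  obtain rfl | hC := eq_or_ne C ⊥
  · -- The zero code has `minDist = sInf ∅ = 0`, but any `d` bounds its weights vacuously.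
    have hmin : minDist ((⊥ : Submodule F (ι → F)) : Set (ι → F)) = 0 := by
      simp [minDist]
    have hcard : 0 < Fintype.card ι := Fintype.card_pos
    refine ⟨Fintype.card ι, fun w hw hw0 => absurd hw hw0, hcard, le_rfl, ?_⟩
    rw [hmin]
    simpa using Nat.one_le_cast (α := ℝ).2 hcard
  · have hpos := minDist_pos hC
    obtain ⟨w, hw, hw0⟩ := C.exists_mem_ne_zero_of_ne_bot hC
    refine ⟨_, fun w => minDist_le_hammingNorm, hpos,
      (minDist_le_hammingNorm hw hw0).trans hammingNorm_le_card_fintype, ?_⟩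
    have : (1 : ℝ) ≤ minDist (C : Set (ι → F)) := mod_cast hpos
    rw [abs_of_nonneg (by linarith)]
    linarith

theorem two_zpow_le_productTesterRobustness {δ : ℝ} (hδ0 : 0 ≤ δ) (hδ1 : δ ≤ 1)
    (hδ : 7 / 8 ≤ δ ^ 4) {m : ℕ} (hm0 : 0 < m) (hm : m ≤ 4) :
    (2 : ℝ) ^ (-16 : ℤ) ≤ productTesterRobustness δ m := by
  have hlow : 7 / 8 ≤ δ ^ m := hδ.trans (pow_le_pow_of_le_one hδ0 hδ1 hm)
  have hup : δ ^ m ≤ 1 := pow_le_one₀ hδ0 hδ1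
  have hm4 : (m : ℝ) ≤ 4 := mod_cast hm
  have : (0 : ℝ) < m := mod_cast hm0
  rw [productTesterRobustness, le_div_iff₀ (by positivity)]
  calc (2 : ℝ) ^ (-16 : ℤ) * (m * (δ ^ m + 2)) ≤ 2 ^ (-16 : ℤ) * (4 * (1 + 2)) := by gcongr
    _ ≤ 7 / 8 := by norm_num
    _ ≤ δ ^ m := hlow

theorem exists_two_zpow_le_productTesterRobustness_mul {F : Type} [Field F] [DecidableEq F]
    {n : ℕ} {C : Submodule F (Fin n → F)}
    (hdn : (7 : ℝ) / 8 ≤ (((minDist (C : Set (Fin n → F)) : ℝ) - 1) / n) ^ 4) :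
    ∃ d : ℕ, (∀ w ∈ C, w ≠ 0 → d ≤ hammingNorm w) ∧ 0 < d ∧ d ≤ n ∧
      (2 : ℝ) ^ (-32 : ℤ) ≤
        productTesterRobustness ((d : ℝ) / n) 4 * productTesterRobustness ((d : ℝ) / n) 3 := by
  have hn : n ≠ 0 := by
    rintro rfl
    norm_num at hdn
  have : NeZero n := ⟨hn⟩
  obtain ⟨d, hC, hd0, hdn', hminDist⟩ := exists_le_hammingNorm_and_abs_minDist_sub_one_le C
  rw [Fintype.card_fin] at hdn'
  have hδ : (7 : ℝ) / 8 ≤ ((d : ℝ) / n) ^ 4 :=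
    calc (7 : ℝ) / 8 ≤ (((minDist (C : Set (Fin n → F)) : ℝ) - 1) / n) ^ 4 := hdn
      _ = (|(minDist (C : Set (Fin n → F)) : ℝ) - 1| / n) ^ 4 := by
        rw [div_pow, div_pow, (by decide : Even 4).pow_abs]
      _ ≤ ((d : ℝ) / n) ^ 4 := by gcongr
  have hδ0 : (0 : ℝ) ≤ (d : ℝ) / n := by positivity
  have hδ1 : (d : ℝ) / n ≤ 1 := div_le_one_of_le₀ (mod_cast hdn') n.cast_nonneg
  have hρ4 := two_zpow_le_productTesterRobustness hδ0 hδ1 hδ four_pos le_rfl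
  have hρ3 := two_zpow_le_productTesterRobustness hδ0 hδ1 hδ three_pos (by norm_num)
  refine ⟨d, hC, hd0, hdn', ?_⟩
  calc (2 : ℝ) ^ (-32 : ℤ) = 2 ^ (-16 : ℤ) * 2 ^ (-16 : ℤ) := by norm_num
    _ ≤ _ := mul_le_mul hρ4 hρ3 (by positivity) (hρ4.trans' (by positivity))

end Parameters

theorem four_to_two_robust_general {F : Type} [Field F] [DecidableEq F] {n m d : ℕ}
    {C : Submodule F (Fin n → F)} (hC : ∀ w ∈ C, w ≠ 0 → d ≤ hammingNorm w) (hd0 : 0 < d)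
    (hdn : d ≤ n) (hm : 2 ≤ m) :
    tensorPow (C : Set (Fin n → F)) (m + 2) =
      {r | ∀ (b₁ : Fin (m + 2)) (i₁ : Fin n) (b₂ : Fin (m + 1)) (i₂ : Fin n),
        sliceAt (sliceAt r b₁ i₁) b₂ i₂ ∈ tensorPow (C : Set (Fin n → F)) m} ∧
    ∀ r : (Fin (m + 2) → Fin n) → F,
      productTesterRobustness ((d : ℝ) / n) (m + 2) *
          productTesterRobustness ((d : ℝ) / n) (m + 1) *
          distToCode (tensorPow (C : Set (Fin n → F)) (m + 2)) r ≤
        (∑ b₁ : Fin (m + 2), ∑ i₁ : Fin n, ∑ b₂ : Fin (m + 1), ∑ i₂ : Fin n,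
          distToCode (tensorPow (C : Set (Fin n → F)) m) (sliceAt (sliceAt r b₁ i₁) b₂ i₂)) /
          (((m + 2 : ℕ) * n) * ((m + 1 : ℕ) * n)) := by
  have hcode : tannerCode (tannerComp (productTester n (m + 1)) (productTester n m))
      (tensorPow (C : Set (Fin n → F)) m) = tensorPow (C : Set (Fin n → F)) (m + 2) := by
    rw [tannerCode_tannerComp, tannerCode_productTester _ (by omega),
      tannerCode_productTester _ (by omega)]
  have houter := isRobust_productTester hC hd0 hdn (hm.trans m.le_succ)
  rw [← tannerCode_productTester _ (one_le_two.trans hm)] at houter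
  have hrobust := houter.comp (isRobust_productTester hC hd0 hdn hm)
    (by unfold productTesterRobustness; positivity)
  refine ⟨?_, fun r => ?_⟩
  · rw [← hcode]
    ext r
    simp only [tannerCode, Prod.forall]
    rfl
  · have := hrobust r
    rw [hcode] at this
    simp only [Fintype.sum_prod_type, Fintype.card_prod, Fintype.card_fin, Nat.cast_mul] at this
    exact this

/-- Let `C` be an `[n,k,d]` code with `((d−1)/n)^4 ≥ 7/8`. Then the Tanner
pair `(G^n_{4,2}, C²)` — whose tests, indexed by `((b₁,i₁),(b₂,i₂))`, read the
2-dimensional slice `(r_{b₁,i₁})_{b₂,i₂}` of `r` and compare it against `C²` — is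
`2^{-32}`-robust: `C⁴ = TPC(G^n_{4,2}, C²)`, and for every `r`, the expected distance of
such a random 2-dimensional slice from `C²` is at least `2^{-32}·δ_{C⁴}(r)`. -/
theorem four_to_two_robust
    {F : Type} [Field F] [Fintype F] [DecidableEq F] {n k d : ℕ}
    (C : Submodule F (Fin n → F))
    (hk : Module.finrank F C = k)
    (hd : minDist (C : Set (Fin n → F)) = d)
    (hdn : (7 : ℝ) / 8 ≤ (((d : ℝ) - 1) / n) ^ 4) :
    (tensorPow (C : Set (Fin n → F)) 4 =
      {r | ∀ (b₁ : Fin 4) (i₁ : Fin n) (b₂ : Fin 3) (i₂ : Fin n),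
        sliceAt (sliceAt r b₁ i₁) b₂ i₂ ∈ tensorPow (C : Set (Fin n → F)) 2}) ∧
    ∀ r : (Fin 4 → Fin n) → F,
      (2 : ℝ) ^ (-32 : ℤ) * distToCode (tensorPow (C : Set (Fin n → F)) 4) r ≤
        (∑ b₁ : Fin 4, ∑ i₁ : Fin n, ∑ b₂ : Fin 3, ∑ i₂ : Fin n,
          distToCode (tensorPow (C : Set (Fin n → F)) 2) (sliceAt (sliceAt r b₁ i₁) b₂ i₂)) /
          ((4 * n) * (3 * n)) := by
  subst hd
  obtain ⟨d, hC, hd0, hdn, hρ⟩ := exists_two_zpow_le_productTesterRobustness_mul hdn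
  obtain ⟨hcode, hrobust⟩ := four_to_two_robust_general hC hd0 hdn le_rfl
  exact ⟨hcode, fun r =>
    (mul_le_mul_of_nonneg_right hρ (distToCode_nonneg _ r)).trans (mod_cast hrobust r)⟩
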